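/- (Algebraic Bäcklund transformation for monopoles.) Let (A,φ) be a connection and Higgs field on ℝ³, α ∈ ℂ∖ℝ, and let V ⊆ ℂ be an open neighborhood of α closed under conjugation. Let ψ : ℝ³ × V → GL(n,ℂ) be smooth, holomorphic in τ, satisfying for all τ ∈ V the monopole linear system (τ∂_y − ∂_ξ)ψ = (τ(A_y + φ) − A_ξ)ψ and (τ∂_η − ∂_y)ψ = (τA_η + φ − A_y)ψ, together with ψ(x,y,t,τ̄)*ψ(x,y,t,τ) = 1. Let π : ℝ³ → M_n(ℂ) be a smooth Hermitian-projection-valued map satisfying (α∂_yπ − ∂_ξπ)π = 0 and (α∂_ηπ − ∂_yπ)π = 0, and let π̃(x,y,t) be the Hermitian projection of ℂⁿ onto ψ(x,y,t,α)(range π(x,y,t)). Then: (1) ψ̃ := g_{α,π̃}·ψ·g_{α,π}⁻¹ extends holomorphically in τ to τ = α with invertible value there; (2) there exist smooth maps Ã_ξ, Ã_η, Ã_y, φ̃ : ℝ³ → M_n(ℂ) with Ã_η = A_η and Ã_y + φ̃ = A_y + φ such that ψ₁ := g_{α,π̃}·ψ satisfies (τ∂_y − ∂_ξ)ψ₁ =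 (τ(Ã_y + φ̃) − Ã_ξ)ψ₁ and (τ∂_η − ∂_y)ψ₁ = (τÃ_η + φ̃ − Ã_y)ψ₁ for all τ ∈ V∖{α,ᾱ}. -/

import Mathlib

open Matrix Complex
open scoped Matrix ComplexConjugate

attribute [local instance] Matrix.normedAddCommGroup Matrix.normedSpace

noncomputable section

/-- `n × n` complex matrices. -/
abbrev Mat (n : ℕ) := Matrix (Fin n) (Fin n) ℂ

/-- Space-time `ℝ³` with coordinates `(x, y, t)`. -/
abbrev P3 : Type := ℝ × ℝ × ℝ

section PartialDerivatives

variable {W : Type*} [NormedAddCommGroup W] [NormedSpace ℝ W]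

/-- Partial derivative in `x`. -/
def pdx (f : P3 → W) (p : P3) : W := deriv (fun s => f (s, p.2.1, p.2.2)) p.1

/-- Partial derivative in `y`. -/
def pdy (f : P3 → W) (p : P3) : W := deriv (fun s => f (p.1, s, p.2.2)) p.2.1

/-- Partial derivative in `t`. -/
def pdt (f : P3 → W) (p : P3) : W := deriv (fun s => f (p.1, p.2.1, s)) p.2.2

/-- Light-cone derivative `∂_ξ = ∂_t + ∂_x`. -/
def pdxi (f : P3 → W) (p : P3) : W := pdt f p + pdx f p

/-- Light-cone derivative `∂_η = ∂_t − ∂_x`. -/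
def pdeta (f : P3 → W) (p : P3) : W := pdt f p - pdx f p

end PartialDerivatives

/-- `∂_z = ½(∂_x − i ∂_y)`. -/
def pdz {n : ℕ} (f : P3 → Mat n) (p : P3) : Mat n :=
  (2⁻¹ : ℂ) • (pdx f p - Complex.I • pdy f p)

/-- `∂_z̄ = ½(∂_x + i ∂_y)`. -/
def pdzbar {n : ℕ} (f : P3 → Mat n) (p : P3) : Mat n :=
  (2⁻¹ : ℂ) • (pdx f p + Complex.I • pdy f p)

/-- Commutator `[X, Y] = XY − YX`. -/
def brk {n : ℕ} (X Y : Mat n) : Mat n := X * Y - Y * X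

/-- Anti-Hermitian-valued map. -/
def SkewHerm {n : ℕ} (f : P3 → Mat n) : Prop := ∀ p : P3, (f p)ᴴ = -(f p)

/-- The space-time monopole equation `F_{xy} = −∇_tφ`, `F_{xt} = −∇_yφ`, `F_{yt} = ∇_xφ`
for the connection `(Ax, Ay, At)` and Higgs field `Ph`, at the point `p`. -/
def MonopoleEqAt {n : ℕ} (Ax Ay At Ph : P3 → Mat n) (p : P3) : Prop :=
  (-(pdx Ay p) + pdy Ax p + brk (Ax p) (Ay p) = -(pdt Ph p - brk (At p) (Ph p))) ∧
  (-(pdx At p) + pdt Ax p + brk (Ax p) (At p) = -(pdy Ph p - brk (Ay p) (Ph p))) ∧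
  (-(pdy At p) + pdt Ay p + brk (Ay p) (At p) = pdx Ph p - brk (Ax p) (Ph p))

/-- The space-time monopole equation on all of `ℝ³`. -/
def MonopoleEq {n : ℕ} (Ax Ay At Ph : P3 → Mat n) : Prop :=
  ∀ p : P3, MonopoleEqAt Ax Ay At Ph p

/-- `E` solves the `μ`-linear system for `(A, φ)`. -/
def SolvesMu {n : ℕ} (Ax Ay At Ph : P3 → Mat n) (μ : ℂ) (E : P3 → Mat n) : Prop :=
  ∀ p : P3,
    (2⁻¹ : ℂ) • pdt E p + μ • pdz E p =
      ((2⁻¹ : ℂ) • (At p + Complex.I • Ph p) +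
        μ • ((2⁻¹ : ℂ) • (Ax p - Complex.I • Ay p))) * E p ∧
    (2⁻¹ : ℂ) • pdt E p + μ⁻¹ • pdzbar E p =
      ((2⁻¹ : ℂ) • (At p - Complex.I • Ph p) +
        μ⁻¹ • ((2⁻¹ : ℂ) • (Ax p + Complex.I • Ay p))) * E p

/-- `F` solves the `λ`-linear system for `(A, φ)`. -/
def SolvesLam {n : ℕ} (Ax Ay At Ph : P3 → Mat n) (lm : ℂ) (F : P3 → Mat n) : Prop :=
  ∀ p : P3,
    lm • pdxi F p - pdy F p = (lm • (At p + Ax p) - (Ay p + Ph p)) * F p ∧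
    lm⁻¹ • pdeta F p - pdy F p = (lm⁻¹ • (At p - Ax p) - (Ay p - Ph p)) * F p

/-- The simple-element `g_{α,π}(τ) = 1 + ((α−ᾱ)/(τ−α))·π^⊥`. -/
def solg {n : ℕ} (a : ℂ) (Pr : P3 → Mat n) (p : P3) (τ : ℂ) : Mat n :=
  1 + ((a - conj a) / (τ - a)) • ((1 : Mat n) - Pr p)

/-- The inverse `g_{α,π}(τ)⁻¹ = 1 + ((ᾱ−α)/(τ−ᾱ))·π^⊥`. -/
def solginv {n : ℕ} (a : ℂ) (Pr : P3 → Mat n) (p : P3) (τ : ℂ) : Mat n :=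
  1 + ((conj a - a) / (τ - conj a)) • ((1 : Mat n) - Pr p)

/-!
Write `P = π`, `T = π̃`, `S = ψ(·, α)`. That `T` is the Hermitian projection onto `S(range P)` means
`T S P = S P` and `P S⁻¹ T = S⁻¹ T`; in terms of the oblique projection `Q = S P S⁻¹` this gives
`T = Q (Q + Qᴴ - 1)⁻¹`, so `T` is smooth.

(1) The residue of `g_{α,T} ψ g_{α,P}⁻¹` at `α` is a multiple of `(1 - T) S P = 0`. The inverse is
the same expression for `ψ⁻¹` with `P` and `T` interchanged, so it extends across `α` too.

(2) Both equations of the linear system read `(τ∂_v - ∂_w)ψ = (τB - C)ψ`. Let `D₁`, `D₂` be the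
covariant derivatives of `T` along `v`, `w`. Differentiating `T S P = S P` gives
`(αD₁ - D₂) T = 0`. Since `D₁`, `D₂` are Hermitian, the adjoint relation is `T (ᾱD₁ - D₂) = 0`, and
since `T² = T` makes `D₁`, `D₂` off-diagonal, together these give `αD₁ - D₂ = (α - ᾱ) T D₁`. This is
exactly the condition for gauging by `g_{α,T}` to replace `C` by `C + (α - ᾱ) D₁` and fix `B`.
-/

lemma ringInverse_mulEquiv {R S : Type*} [MonoidWithZero R] [MonoidWithZero S] (e : R ≃* S)
    (x : R) : Ring.inverse (e x) = e (Ring.inverse x) := by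
  by_cases hx : IsUnit x
  · obtain ⟨u, rfl⟩ := hx
    exact (Ring.inverse_unit (Units.map e.toMonoidHom u)).trans
      (congrArg e (Ring.inverse_unit u)).symm
  · rw [Ring.inverse_non_unit x hx, Ring.inverse_non_unit _ (mt (MulEquiv.isUnit_map e).1 hx),
      map_zero]

section MatrixCalculus

variable {𝕜 E m : Type*} [NontriviallyNormedField 𝕜] [CompleteSpace 𝕜]
  [NormedAddCommGroup E] [NormedSpace 𝕜 E] [Fintype m]

section Mul

variable {A : Type*} [NormedRing A] [NormedAlgebra 𝕜 A] [FiniteDimensional 𝕜 A]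
  {f g : E → Matrix m m A} {x : E}

variable (𝕜 m A) in
/-- Matrix multiplication as a continuous bilinear map. It gives access to the product rules, which
Mathlib states for normed algebras: the entrywise sup norm is not submultiplicative. -/
def matrixMulCLM : Matrix m m A →L[𝕜] Matrix m m A →L[𝕜] Matrix m m A :=
  (LinearMap.mul 𝕜 (Matrix m m A)).toContinuousBilinearMap

lemma contDiff_matrix_mul {k : WithTop ℕ∞} (hf : ContDiff 𝕜 k f) (hg : ContDiff 𝕜 k g) :
    ContDiff 𝕜 k (fun y => f y * g y) :=
  (matrixMulCLM 𝕜 m A).isBoundedBilinearMap.contDiff.comp₂ hf hg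

lemma hasFDerivAt_matrix_mul {f' g' : E →L[𝕜] Matrix m m A}
    (hf : HasFDerivAt f f' x) (hg : HasFDerivAt g g' x) :
    HasFDerivAt (fun y => f y * g y)
      ((matrixMulCLM 𝕜 m A).precompR E (f x) g' + (matrixMulCLM 𝕜 m A).precompL E f' (g x)) x :=
  (matrixMulCLM 𝕜 m A).hasFDerivAt_of_bilinear hf hg

lemma differentiableAt_matrix_mul (hf : DifferentiableAt 𝕜 f x) (hg : DifferentiableAt 𝕜 g x) :
    DifferentiableAt 𝕜 (fun y => f y * g y) x :=
  (hasFDerivAt_matrix_mul hf.hasFDerivAt hg.hasFDerivAt).differentiableAt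

lemma fderiv_matrix_mul_apply (hf : DifferentiableAt 𝕜 f x) (hg : DifferentiableAt 𝕜 g x) (v : E) :
    fderiv 𝕜 (fun y => f y * g y) x v = fderiv 𝕜 f x v * g x + f x * fderiv 𝕜 g x v := by
  have h := (hasFDerivAt_matrix_mul hf.hasFDerivAt hg.hasFDerivAt).fderiv
  exact (congrArg (· v) h).trans (add_comm _ _)

end Mul

lemma contDiffAt_matrix_inv [DecidableEq m] {M : Matrix m m 𝕜} (hM : IsUnit M)
    {k : WithTop ℕ∞} : ContDiffAt 𝕜 k (fun N : Matrix m m 𝕜 => N⁻¹) M := by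
  let e : Matrix m m 𝕜 ≃ₐ[𝕜] ((m → 𝕜) →L[𝕜] (m → 𝕜)) :=
    Matrix.toLinAlgEquiv'.trans (Module.End.toContinuousLinearMap (m → 𝕜))
  let e' : Matrix m m 𝕜 ≃L[𝕜] ((m → 𝕜) →L[𝕜] (m → 𝕜)) :=
    e.toLinearEquiv.toContinuousLinearEquiv
  have inv_eq (N : Matrix m m 𝕜) : N⁻¹ = e'.symm (Ring.inverse (e' N)) := by
    rw [Matrix.nonsing_inv_eq_ringInverse]
    exact (e'.symm_apply_eq.2 (ringInverse_mulEquiv e.toMulEquiv N)).symm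
  simp only [inv_eq]
  exact e'.symm.contDiff.contDiffAt.comp M
    ((contDiffAt_ringInverse 𝕜 (hM.map e).unit).comp M e'.contDiff.contDiffAt)

section Real

variable {E : Type*} [NormedAddCommGroup E] [NormedSpace ℝ E] {f : E → Matrix m m ℂ}

lemma contDiff_conjTranspose {k : WithTop ℕ∞} (hf : ContDiff ℝ k f) :
    ContDiff ℝ k (fun x => (f x)ᴴ) :=
  (starL' ℝ : Matrix m m ℂ ≃L[ℝ] Matrix m m ℂ).contDiff.comp hf

lemma fderiv_conjTranspose_apply {m : Type*} [Finite m] (f : E → Matrix m m ℂ) (x v : E) :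
    fderiv ℝ (fun y => (f y)ᴴ) x v = (fderiv ℝ f x v)ᴴ := by
  have := Fintype.ofFinite m
  exact congrArg (· v) (fderiv_star (𝕜 := ℝ) (f := f) (x := x))

end Real

end MatrixCalculus

section SimpleFactor

variable {𝕜 R : Type*} [Field 𝕜] [Ring R] [Algebra 𝕜 R]

/-- The simple factor with pole `a` and zero `b`, so that `g_{α,π}(τ) = simpleFactor α ᾱ τ π` and
`g_{α,π}⁻¹(τ) = simpleFactor ᾱ α τ π`. -/
def simpleFactor (a b τ : 𝕜) (T : R) : R := 1 + ((a - b) / (τ - a)) • (1 - T)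

lemma simpleFactor_self {a b : 𝕜} (hab : a ≠ b) (T : R) : simpleFactor b a a T = T := by
  have ratio : (b - a) / (a - b) = -1 := by
    rw [← neg_sub a b, neg_div, div_self (sub_ne_zero.2 hab)]
  rw [simpleFactor, ratio, neg_one_smul]
  abel

lemma simpleFactor_mul_simpleFactor {a b τ : 𝕜} (ha : τ ≠ a) (hb : τ ≠ b) {T : R}
    (hT : IsIdempotentElem T) : simpleFactor a b τ T * simpleFactor b a τ T = 1 := by
  have coeff : (a - b) / (τ - a) + (b - a) / (τ - b) +
      (a - b) / (τ - a) * ((b - a) / (τ - b)) = 0 := by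
    field_simp [sub_ne_zero.2 ha, sub_ne_zero.2 hb]
    ring
  calc simpleFactor a b τ T * simpleFactor b a τ T
      = 1 + ((a - b) / (τ - a) + (b - a) / (τ - b) +
          (a - b) / (τ - a) * ((b - a) / (τ - b))) • (1 - T) := by
        simp only [simpleFactor, add_mul, mul_add, one_mul, mul_one, smul_mul_smul_comm,
          hT.one_sub.eq]
        module
    _ = 1 := by rw [coeff, zero_smul, add_zero]

lemma smul_mul_simpleFactor {a b τ : 𝕜} (hτ : τ ≠ a) {T D₁ D₂ : R}
    (hD₁ : D₁ * T + T * D₁ = D₁) (hD : a • D₁ - D₂ = (a - b) • (T * D₁)) :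
    ((a - b) • D₁) * simpleFactor a b τ T = ((a - b) / (τ - a)) • (τ • D₁ - D₂) := by
  have hk : (a - b) / (τ - a) * (τ - a) = a - b := div_mul_cancel₀ _ (sub_ne_zero.2 hτ)
  set k := (a - b) / (τ - a)
  have flip : D₁ * (1 - T) = T * D₁ := by
    rw [mul_sub, mul_one, sub_eq_iff_eq_add', hD₁]
  calc ((a - b) • D₁) * simpleFactor a b τ T
      = (a - b) • D₁ + k • (a - b) • (T * D₁) := by
        rw [simpleFactor, mul_add, mul_one, mul_smul_comm, smul_mul_assoc, flip]
    _ = (k * (τ - a)) • D₁ + k • (a • D₁ - D₂) := by rw [hk, hD]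
    _ = k • (τ • D₁ - D₂) := by module

lemma smul_sub_eq_smul_mul_of_isSelfAdjoint [StarRing 𝕜] [StarRing R] [StarModule 𝕜 R]
    {a : 𝕜} {T D₁ D₂ : R} (hT : IsSelfAdjoint T) (hD₁ : IsSelfAdjoint D₁)
    (hD₂ : IsSelfAdjoint D₂) (h₁ : D₁ * T + T * D₁ = D₁) (h₂ : D₂ * T + T * D₂ = D₂)
    (h : (a • D₁ - D₂) * T = 0) : a • D₁ - D₂ = (a - conj a) • (T * D₁) := by
  have h_star : T * (conj a • D₁ - D₂) = 0 := by
    simpa [starRingEnd_apply, hT.star_eq, hD₁.star_eq, hD₂.star_eq] using congrArg star h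
  calc a • D₁ - D₂ = (a • D₁ - D₂) * T + T * (a • D₁ - D₂) := by
        nth_rw 1 [← h₁, ← h₂]
        simp only [sub_mul, mul_sub, smul_mul_assoc, mul_smul_comm]
        module
    _ = T * (a • D₁ - D₂) - T * (conj a • D₁ - D₂) := by rw [h, h_star, zero_add, sub_zero]
    _ = (a - conj a) • (T * D₁) := by
        simp only [mul_sub, mul_smul_comm]
        module

end SimpleFactor

section Projection

variable {m : Type*} [Fintype m]

section Range

variable {A : Type*} [CommRing A] {S P T : Matrix m m A}

lemma mul_eq_right_iff_range_mulVecLin_le {M : Matrix m m A} (hT : IsIdempotentElem T) :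
    T * M = M ↔ LinearMap.range M.mulVecLin ≤ LinearMap.range T.mulVecLin := by
  classical
  have hT' : IsIdempotentElem T.mulVecLin := by
    rw [IsIdempotentElem, Module.End.mul_eq_comp, ← Matrix.mulVecLin_mul, hT.eq]
  rw [← LinearMap.IsIdempotentElem.comp_eq_right_iff hT', ← Matrix.mulVecLin_mul]
  exact (Matrix.toLin' (R := A) (m := m) (n := m)).injective.eq_iff.symm

lemma mul_mul_eq_of_range_eq_map (hT : IsIdempotentElem T)
    (hrange : LinearMap.range T.mulVecLin = (LinearMap.range P.mulVecLin).map S.mulVecLin) :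
    T * (S * P) = S * P := by
  rw [mul_eq_right_iff_range_mulVecLin_le hT, Matrix.mulVecLin_mul, LinearMap.range_comp, hrange]

variable [DecidableEq m]

lemma range_eq_map_inv (hS : IsUnit S)
    (hrange : LinearMap.range T.mulVecLin = (LinearMap.range P.mulVecLin).map S.mulVecLin) :
    LinearMap.range P.mulVecLin = (LinearMap.range T.mulVecLin).map S⁻¹.mulVecLin := by
  rw [hrange, ← Submodule.map_comp, ← Matrix.mulVecLin_mul,
    Matrix.nonsing_inv_mul S ((Matrix.isUnit_iff_isUnit_det S).1 hS), Matrix.mulVecLin_one,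
    Submodule.map_id]

lemma mul_inv_mul_eq_of_range_eq_map (hP : IsIdempotentElem P) (hS : IsUnit S)
    (hrange : LinearMap.range T.mulVecLin = (LinearMap.range P.mulVecLin).map S.mulVecLin) :
    P * (S⁻¹ * T) = S⁻¹ * T :=
  mul_mul_eq_of_range_eq_map hP (range_eq_map_inv hS hrange)

end Range

variable [DecidableEq m]

open scoped ComplexOrder in
lemma isUnit_add_conjTranspose_sub_one {Q : Matrix m m ℂ} (hQ : IsIdempotentElem Q) :
    IsUnit (Q + Qᴴ - 1) := by
  have hQ_star : Qᴴ * Qᴴ = Qᴴ := hQ.star.eq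
  have square : (Q + Qᴴ - 1) * (Q + Qᴴ - 1) = 1 + (Q - Qᴴ)ᴴ * (Q - Qᴴ) := by
    simp only [Matrix.conjTranspose_sub, Matrix.conjTranspose_conjTranspose, sub_mul, mul_sub,
      add_mul, mul_add, one_mul, mul_one, hQ.eq, hQ_star]
    abel
  have posDef : ((Q + Qᴴ - 1) * (Q + Qᴴ - 1)).PosDef := by
    rw [square]
    exact Matrix.PosDef.one.add_posSemidef (Matrix.posSemidef_conjTranspose_mul_self _)
  exact isUnit_of_mul_isUnit_left posDef.isUnit

lemma isIdempotentElem_of_mul_eq {M : Type*} [Semigroup M] {Q T : M} (hTQ : T * Q = Q)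
    (hQT : Q * T = T) : IsIdempotentElem Q :=
  calc Q * Q = Q * T * Q := by rw [mul_assoc, hTQ]
    _ = Q := by rw [hQT, hTQ]

lemma eq_mul_inv_of_isSelfAdjoint {Q T : Matrix m m ℂ} (hT : IsSelfAdjoint T)
    (hTQ : T * Q = Q) (hQT : Q * T = T) : T = Q * (Q + Qᴴ - 1)⁻¹ := by
  have hTQ_star : T * Qᴴ = T := by
    simpa [← Matrix.star_eq_conjTranspose, hT.star_eq] using congrArg star hQT
  have hdet := (Matrix.isUnit_iff_isUnit_det _).1
    (isUnit_add_conjTranspose_sub_one (isIdempotentElem_of_mul_eq hTQ hQT))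
  have hmul : T * (Q + Qᴴ - 1) = Q := by
    rw [mul_sub, mul_add, mul_one, hTQ, hTQ_star, add_sub_cancel_right]
  calc T = T * (Q + Qᴴ - 1) * (Q + Qᴴ - 1)⁻¹ := (Matrix.mul_nonsing_inv_cancel_right _ T hdet).symm
    _ = Q * (Q + Qᴴ - 1)⁻¹ := by rw [hmul]

variable {E : Type*} [NormedAddCommGroup E] [NormedSpace ℝ E]

lemma contDiff_matrix_inv {k : WithTop ℕ∞} {f : E → Matrix m m ℂ} (hf : ContDiff ℝ k f)
    (hunit : ∀ p, IsUnit (f p)) : ContDiff ℝ k (fun p => (f p)⁻¹) :=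
  contDiff_iff_contDiffAt.2 fun p =>
    ((contDiffAt_matrix_inv (hunit p)).restrict_scalars ℝ).comp p hf.contDiffAt

lemma contDiff_of_mul_eq_of_inv_mul_eq {k : WithTop ℕ∞} {S P T : E → Matrix m m ℂ}
    (hS : ContDiff ℝ k S) (hP : ContDiff ℝ k P) (hunit : ∀ p, IsUnit (S p))
    (hT : ∀ p, IsSelfAdjoint (T p))
    (hTSP : ∀ p, T p * (S p * P p) = S p * P p)
    (hPST : ∀ p, P p * ((S p)⁻¹ * T p) = (S p)⁻¹ * T p) : ContDiff ℝ k T := by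
  have hdet p := (Matrix.isUnit_iff_isUnit_det _).1 (hunit p)
  let Q p := S p * P p * (S p)⁻¹
  have hQ : ContDiff ℝ k Q :=
    contDiff_matrix_mul (contDiff_matrix_mul hS hP) (contDiff_matrix_inv hS hunit)
  have hTQ p : T p * Q p = Q p := by rw [← mul_assoc, hTSP]
  have hQT p : Q p * T p = T p := by
    rw [mul_assoc, mul_assoc, hPST, ← mul_assoc, Matrix.mul_nonsing_inv _ (hdet p), one_mul]
  have formula : T = fun p => Q p * (Q p + (Q p)ᴴ - 1)⁻¹ :=
    funext fun p => eq_mul_inv_of_isSelfAdjoint (hT p) (hTQ p) (hQT p)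
  rw [formula]
  exact contDiff_matrix_mul hQ <| contDiff_matrix_inv
    ((hQ.add (contDiff_conjTranspose hQ)).sub contDiff_const)
    fun p => isUnit_add_conjTranspose_sub_one (isIdempotentElem_of_mul_eq (hTQ p) (hQT p))

end Projection

section Extension

open Filter Topology

variable {m : Type*} [Fintype m] [DecidableEq m] {a b : ℂ} {f : ℂ → Matrix m m ℂ}
  {P T : Matrix m m ℂ}

lemma differentiableAt_simpleFactor {τ : ℂ} (hτ : τ ≠ a) (T : Matrix m m ℂ) :
    DifferentiableAt ℂ (fun σ => simpleFactor a b σ T) τ :=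
  (((differentiableAt_const (a - b)).div (differentiableAt_id.sub_const a)
    (sub_ne_zero.2 hτ)).smul_const (1 - T)).const_add 1

/-- The extension across `τ = a` of the dressed map
`τ ↦ simpleFactor a b τ T * f τ * simpleFactor b a τ P`, whose only singular contribution is a
difference quotient when `(1 - T) * f a * P = 0`. -/
def dressedExtension (a b : ℂ) (f : ℂ → Matrix m m ℂ) (P T : Matrix m m ℂ) (τ : ℂ) :
    Matrix m m ℂ :=
  f τ * simpleFactor b a τ P +
    (a - b) • dslope (fun σ => (1 - T) * (f σ * simpleFactor b a σ P)) a τ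

lemma dressedExtension_of_ne (hab : a ≠ b) (hTfP : T * (f a * P) = f a * P) {τ : ℂ}
    (hτ : τ ≠ a) : dressedExtension a b f P T τ =
      simpleFactor a b τ T * f τ * simpleFactor b a τ P := by
  have vanishes : (1 - T) * (f a * simpleFactor b a a P) = 0 := by
    rw [simpleFactor_self hab, sub_mul, one_mul, hTfP, sub_self]
  rw [dressedExtension, dslope_of_ne _ hτ, slope_def_module, vanishes, sub_zero, smul_smul,
    ← div_eq_mul_inv, simpleFactor.eq_def a b, add_mul, add_mul, one_mul, smul_mul_assoc,
    smul_mul_assoc, mul_assoc]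

lemma differentiableAt_dressedExtension (hab : a ≠ b)
    (hf : ∀ᶠ τ in 𝓝 a, DifferentiableAt ℂ f τ) :
    DifferentiableAt ℂ (dressedExtension a b f P T) a := by
  have hfh : ∀ᶠ τ in 𝓝 a, DifferentiableAt ℂ (fun σ => f σ * simpleFactor b a σ P) τ := by
    filter_upwards [hf, isOpen_ne.mem_nhds hab] with τ hfτ hτ
    exact differentiableAt_matrix_mul hfτ (differentiableAt_simpleFactor hτ P)
  have hslope : DifferentiableAt ℂ
      (dslope (fun σ => (1 - T) * (f σ * simpleFactor b a σ P)) a) a :=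
    ((Complex.differentiableOn_dslope hfh).2 fun τ hτ =>
      (differentiableAt_matrix_mul (differentiableAt_const _) hτ).differentiableWithinAt
        ).differentiableAt hfh
  exact hfh.self_of_nhds.add (hslope.const_smul (a - b))

lemma eventually_isUnit_matrix (hf : ContinuousAt f a) (hunit : IsUnit (f a)) :
    ∀ᶠ τ in 𝓝 a, IsUnit (f τ) := by
  simp only [Matrix.isUnit_iff_isUnit_det, isUnit_iff_ne_zero] at hunit ⊢
  exact (continuous_id.matrix_det.continuousAt.comp hf).eventually_ne hunit

lemma isUnit_dressedExtension (hab : a ≠ b) (hP : IsIdempotentElem P) (hT : IsIdempotentElem T)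
    (hf : ∀ᶠ τ in 𝓝 a, DifferentiableAt ℂ f τ) (hunit : IsUnit (f a))
    (hTfP : T * (f a * P) = f a * P) (hPfT : P * ((f a)⁻¹ * T) = (f a)⁻¹ * T) :
    IsUnit (dressedExtension a b f P T a) := by
  let F := dressedExtension a b f P T
  let G := dressedExtension a b (fun τ => (f τ)⁻¹) T P
  have hunits := eventually_isUnit_matrix hf.self_of_nhds.continuousAt hunit
  have hf_inv : ∀ᶠ τ in 𝓝 a, DifferentiableAt ℂ (fun σ => (f σ)⁻¹) τ := by
    filter_upwards [hf, hunits] with τ hfτ hτ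
    exact ((contDiffAt_matrix_inv (k := 1) hτ).differentiableAt one_ne_zero).comp τ hfτ
  have hFG_ne : ∀ᶠ τ in 𝓝[≠] a, F τ * G τ = 1 := by
    filter_upwards [self_mem_nhdsWithin, nhdsWithin_le_nhds hunits,
      nhdsWithin_le_nhds (isOpen_ne.mem_nhds hab)] with τ hτa hτ hτb
    have hdet := (Matrix.isUnit_iff_isUnit_det _).1 hτ
    calc F τ * G τ
        = simpleFactor a b τ T * f τ * (simpleFactor b a τ P * simpleFactor a b τ P) *
            (f τ)⁻¹ * simpleFactor b a τ T := by
          simp only [F, G, dressedExtension_of_ne hab hTfP hτa,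
            dressedExtension_of_ne (f := fun σ => (f σ)⁻¹) hab hPfT hτa, mul_assoc]
      _ = 1 := by
          rw [simpleFactor_mul_simpleFactor hτb hτa hP, mul_one,
            Matrix.mul_nonsing_inv_cancel_right _ _ hdet,
            simpleFactor_mul_simpleFactor hτa hτb hT]
  have hFG : Tendsto (fun τ => F τ * G τ) (𝓝[≠] a) (𝓝 (F a * G a)) :=
    ((differentiableAt_dressedExtension hab hf).continuousAt.mul
      (differentiableAt_dressedExtension hab hf_inv).continuousAt).tendsto.mono_left
      nhdsWithin_le_nhds
  exact IsUnit.of_mul_eq_one (G a)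
    (tendsto_nhds_unique hFG (tendsto_const_nhds.congr' (hFG_ne.mono fun _ h => h.symm)))

end Extension

section LaxFrame

variable {m E : Type*} [Fintype m] [NormedAddCommGroup E] [NormedSpace ℝ E]
  {a b τ : ℂ} {v w : E} {B C S P T Y : E → Matrix m m ℂ} {p : E}

/-- `Y` solves `(τ∂_v - ∂_w)Y = (τB - C)Y`, the common shape of the two equations of the monopole
linear system. -/
def IsLaxFrame (v w : E) (B C : E → Matrix m m ℂ) (τ : ℂ) (Y : E → Matrix m m ℂ) : Prop :=
  ∀ p, τ • fderiv ℝ Y p v - fderiv ℝ Y p w = (τ • B p - C p) * Y p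

/-- The covariant derivative `∂_v T - [B, T]` of an endomorphism field `T`, where `B` is the
component along `v` of the connection. -/
def covDeriv (v : E) (B T : E → Matrix m m ℂ) (p : E) : Matrix m m ℂ :=
  fderiv ℝ T p v - ⁅B p, T p⁆

lemma contDiff_covDeriv (hB : ContDiff ℝ (⊤ : ℕ∞) B) (hT : ContDiff ℝ (⊤ : ℕ∞) T) (v : E) :
    ContDiff ℝ (⊤ : ℕ∞) (covDeriv v B T) :=
  ((hT.fderiv_right (m := (⊤ : ℕ∞)) le_rfl).clm_apply contDiff_const).sub
    ((contDiff_matrix_mul hB hT).sub (contDiff_matrix_mul hT hB))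

lemma isSelfAdjoint_covDeriv (hT : ∀ p, (T p)ᴴ = T p) (hB : (B p)ᴴ = -B p) (v : E) :
    IsSelfAdjoint (covDeriv v B T p) := by
  have hderiv : (fderiv ℝ T p v)ᴴ = fderiv ℝ T p v := by
    rw [← fderiv_conjTranspose_apply, funext hT]
  rw [IsSelfAdjoint, Matrix.star_eq_conjTranspose, covDeriv, Ring.lie_def,
    Matrix.conjTranspose_sub, Matrix.conjTranspose_sub, Matrix.conjTranspose_mul,
    Matrix.conjTranspose_mul, hderiv, hT, hB]
  noncomm_ring

lemma covDeriv_mul_add_mul_covDeriv (hT : DifferentiableAt ℝ T p)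
    (hT_idem : ∀ p, IsIdempotentElem (T p)) (v : E) (B : E → Matrix m m ℂ) :
    covDeriv v B T p * T p + T p * covDeriv v B T p = covDeriv v B T p := by
  have hderiv : fderiv ℝ T p v * T p + T p * fderiv ℝ T p v = fderiv ℝ T p v := by
    rw [← fderiv_matrix_mul_apply hT hT, funext fun q => (hT_idem q).eq]
  have hbracket : ⁅B p, T p⁆ * T p + T p * ⁅B p, T p⁆ = ⁅B p, T p⁆ := by
    calc ⁅B p, T p⁆ * T p + T p * ⁅B p, T p⁆ = ⁅B p, T p * T p⁆ := by
          simp only [Ring.lie_def]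
          noncomm_ring
      _ = ⁅B p, T p⁆ := by rw [(hT_idem p).eq]
  calc covDeriv v B T p * T p + T p * covDeriv v B T p
      = (fderiv ℝ T p v * T p + T p * fderiv ℝ T p v) -
          (⁅B p, T p⁆ * T p + T p * ⁅B p, T p⁆) := by
        rw [covDeriv]
        noncomm_ring
    _ = covDeriv v B T p := by rw [hderiv, hbracket, covDeriv]

lemma smul_fderiv_mul_sub_fderiv_mul {F G : E → Matrix m m ℂ} (hF : DifferentiableAt ℝ F p)
    (hG : DifferentiableAt ℝ G p) (τ : ℂ) (v w : E) :
    τ • fderiv ℝ (fun q => F q * G q) p v - fderiv ℝ (fun q => F q * G q) p w =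
      (τ • fderiv ℝ F p v - fderiv ℝ F p w) * G p +
        F p * (τ • fderiv ℝ G p v - fderiv ℝ G p w) := by
  rw [fderiv_matrix_mul_apply hF hG, fderiv_matrix_mul_apply hF hG]
  simp only [sub_mul, mul_sub, smul_mul_assoc, mul_smul_comm]
  module

lemma smul_covDeriv_sub_covDeriv (τ : ℂ) (v w : E) (B C T : E → Matrix m m ℂ) (p : E) :
    τ • covDeriv v B T p - covDeriv w C T p =
      τ • fderiv ℝ T p v - fderiv ℝ T p w - ⁅τ • B p - C p, T p⁆ := by
  simp only [covDeriv, Ring.lie_def, sub_mul, mul_sub, smul_mul_assoc, mul_smul_comm]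
  module

lemma covDeriv_mul_eq_zero_of_isLaxFrame (hS : Differentiable ℝ S) (hP : Differentiable ℝ P)
    (hT : Differentiable ℝ T) (hP_idem : IsIdempotentElem (P p))
    (hTSP : ∀ q, T q * (S q * P q) = S q * P q) {X : Matrix m m ℂ} (hX : T p = S p * P p * X)
    (hframe : IsLaxFrame v w B C a S)
    (hsol : (a • fderiv ℝ P p v - fderiv ℝ P p w) * P p = 0) :
    (a • covDeriv v B T p - covDeriv w C T p) * T p = 0 := by
  let K q := S q * P q
  let U := a • B p - C p
  let DT := a • fderiv ℝ T p v - fderiv ℝ T p w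
  let DK := a • fderiv ℝ K p v - fderiv ℝ K p w
  have hK : Differentiable ℝ K := fun q => differentiableAt_matrix_mul (hS q) (hP q)
  have hKP : K p * P p = K p := by rw [mul_assoc, hP_idem.eq]
  have hDK : DK * P p = U * K p := by
    simp only [DK, K, smul_fderiv_mul_sub_fderiv_mul (hS p) (hP p), hframe p, add_mul, mul_assoc,
      hsol, hP_idem.eq, mul_zero, add_zero, U]
  have hDTK : DT * K p + T p * DK = DK := by
    rw [← smul_fderiv_mul_sub_fderiv_mul (hT p) (hK p), funext hTSP]
  have hcov : (DT - ⁅U, T p⁆) * K p = 0 := by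
    calc (DT - ⁅U, T p⁆) * K p
        = (DT * K p + T p * (U * K p)) - U * (T p * K p) := by
          rw [Ring.lie_def]
          noncomm_ring
      _ = (DT * K p + T p * DK) * P p - U * K p := by
          rw [hTSP p, ← hDK, add_mul, mul_assoc DT, hKP, mul_assoc (T p)]
      _ = 0 := by rw [hDTK, hDK, sub_self]
  rw [smul_covDeriv_sub_covDeriv, hX, ← mul_assoc, ← hX, hcov, zero_mul]

variable [DecidableEq m]

lemma fderiv_simpleFactor_apply (hT : DifferentiableAt ℝ T p) (v : E) :
    fderiv ℝ (fun q => simpleFactor a b τ (T q)) p v =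
      -(((a - b) / (τ - a)) • fderiv ℝ T p v) := by
  have h := ((hT.hasFDerivAt.const_sub 1).const_smul ((a - b) / (τ - a))).const_add 1
  exact (congrArg (· v) h.fderiv).trans (smul_neg ((a - b) / (τ - a)) (fderiv ℝ T p v))

lemma differentiable_simpleFactor (hT : Differentiable ℝ T) (a b τ : ℂ) :
    Differentiable ℝ (fun q => simpleFactor a b τ (T q)) := fun q =>
  (((hT q).const_sub 1).const_smul ((a - b) / (τ - a))).const_add 1

lemma isLaxFrame_simpleFactor_mul (hT : Differentiable ℝ T) (hY : Differentiable ℝ Y)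
    (hT_idem : ∀ p, IsIdempotentElem (T p)) (hτ : τ ≠ a)
    (hcov : ∀ p, a • covDeriv v B T p - covDeriv w C T p = (a - b) • (T p * covDeriv v B T p))
    (hframe : IsLaxFrame v w B C τ Y) :
    IsLaxFrame v w B (C + (a - b) • covDeriv v B T) τ
      (fun q => simpleFactor a b τ (T q) * Y q) := by
  intro p
  let k := (a - b) / (τ - a)
  let g := simpleFactor a b τ (T p)
  let U := τ • B p - C p
  have hbracket : U * g - g * U = -(k • ⁅U, T p⁆) := by
    simp only [g, simpleFactor, Ring.lie_def, mul_add, add_mul, mul_sub, sub_mul, mul_smul_comm,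
      smul_mul_assoc, mul_one, one_mul]
    module
  have hdressed : ((a - b) • covDeriv v B T p) * g =
      k • (τ • fderiv ℝ T p v - fderiv ℝ T p w) - k • ⁅U, T p⁆ := by
    rw [smul_mul_simpleFactor hτ (covDeriv_mul_add_mul_covDeriv (hT p) hT_idem v B) (hcov p),
      smul_covDeriv_sub_covDeriv, smul_sub]
  calc τ • fderiv ℝ (fun q => simpleFactor a b τ (T q) * Y q) p v -
        fderiv ℝ (fun q => simpleFactor a b τ (T q) * Y q) p w
      = -(k • (τ • fderiv ℝ T p v - fderiv ℝ T p w)) * Y p + g * (U * Y p) := by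
        rw [smul_fderiv_mul_sub_fderiv_mul (differentiable_simpleFactor hT a b τ p) (hY p),
          fderiv_simpleFactor_apply (hT p),
          fderiv_simpleFactor_apply (hT p), hframe p]
        congr 2
        module
    _ = (U * g - ((a - b) • covDeriv v B T p) * g) * Y p := by
        rw [hdressed, sub_eq_iff_eq_add.1 hbracket]
        noncomm_ring
    _ = (τ • B p - (C + (a - b) • covDeriv v B T) p) * (g * Y p) := by
        simp only [U, Pi.add_apply, Pi.smul_apply, ← sub_mul, sub_sub, mul_assoc]

lemma isLaxFrame_simpleFactor_conj_mul (hS : Differentiable ℝ S) (hP : Differentiable ℝ P)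
    (hT : Differentiable ℝ T) (hY : Differentiable ℝ Y) (hunit : ∀ p, IsUnit (S p))
    (hB : ∀ p, (B p)ᴴ = -B p) (hC : ∀ p, (C p)ᴴ = -C p)
    (hP_idem : ∀ p, IsIdempotentElem (P p)) (hT_idem : ∀ p, IsIdempotentElem (T p))
    (hT_self : ∀ p, (T p)ᴴ = T p) (hTSP : ∀ p, T p * (S p * P p) = S p * P p)
    (hPST : ∀ p, P p * ((S p)⁻¹ * T p) = (S p)⁻¹ * T p)
    (hsol : ∀ p, (a • fderiv ℝ P p v - fderiv ℝ P p w) * P p = 0)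
    (hframe_a : IsLaxFrame v w B C a S) (hτ : τ ≠ a) (hframe : IsLaxFrame v w B C τ Y) :
    IsLaxFrame v w B (C + (a - conj a) • covDeriv v B T) τ
      (fun q => simpleFactor a (conj a) τ (T q) * Y q) := by
  refine isLaxFrame_simpleFactor_mul hT hY hT_idem hτ (fun p => ?_) hframe
  have hT_factor : T p = S p * P p * ((S p)⁻¹ * T p) := by
    rw [mul_assoc, hPST, Matrix.mul_nonsing_inv_cancel_left _ _
      ((Matrix.isUnit_iff_isUnit_det _).1 (hunit p))]
  exact smul_sub_eq_smul_mul_of_isSelfAdjoint (hT_self p)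
    (isSelfAdjoint_covDeriv hT_self (hB p) v) (isSelfAdjoint_covDeriv hT_self (hC p) w)
    (covDeriv_mul_add_mul_covDeriv (hT p) hT_idem v B)
    (covDeriv_mul_add_mul_covDeriv (hT p) hT_idem w C)
    (covDeriv_mul_eq_zero_of_isLaxFrame hS hP hT (hP_idem p) hTSP hT_factor hframe_a (hsol p))

end LaxFrame

section Monopole

section PartialDerivatives

variable {W : Type*} [NormedAddCommGroup W] [NormedSpace ℝ W] {f : P3 → W} {p : P3}

lemma pdx_eq_fderiv (hf : DifferentiableAt ℝ f p) : pdx f p = fderiv ℝ f p (1, 0, 0) :=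
  (hf.hasFDerivAt.comp_hasDerivAt p.1
    ((hasDerivAt_id p.1).prodMk (hasDerivAt_const p.1 p.2))).deriv

lemma pdy_eq_fderiv (hf : DifferentiableAt ℝ f p) : pdy f p = fderiv ℝ f p (0, 1, 0) :=
  (hf.hasFDerivAt.comp_hasDerivAt p.2.1 ((hasDerivAt_const p.2.1 p.1).prodMk
    ((hasDerivAt_id p.2.1).prodMk (hasDerivAt_const p.2.1 p.2.2)))).deriv

lemma pdt_eq_fderiv (hf : DifferentiableAt ℝ f p) : pdt f p = fderiv ℝ f p (0, 0, 1) :=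
  (hf.hasFDerivAt.comp_hasDerivAt p.2.2 ((hasDerivAt_const p.2.2 p.1).prodMk
    ((hasDerivAt_const p.2.2 p.2.1).prodMk (hasDerivAt_id p.2.2)))).deriv

lemma pdxi_eq_fderiv (hf : DifferentiableAt ℝ f p) : pdxi f p = fderiv ℝ f p (1, 0, 1) := by
  rw [pdxi, pdt_eq_fderiv hf, pdx_eq_fderiv hf, ← map_add]
  simp

lemma pdeta_eq_fderiv (hf : DifferentiableAt ℝ f p) : pdeta f p = fderiv ℝ f p (-1, 0, 1) := by
  rw [pdeta, pdt_eq_fderiv hf, pdx_eq_fderiv hf, ← map_sub]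
  simp

end PartialDerivatives

variable {n : ℕ}

/-- `Y` solves the monopole linear system with spectral parameter `τ`, for the connection with
light-cone components `Axi`, `Aeta`, `Ay` and the Higgs field `Ph`. -/
def IsMonopoleFrame (Axi Aeta Ay Ph : P3 → Mat n) (τ : ℂ) (Y : P3 → Mat n) : Prop :=
  ∀ p, τ • pdy Y p - pdxi Y p = (τ • (Ay p + Ph p) - Axi p) * Y p ∧
    τ • pdeta Y p - pdy Y p = (τ • Aeta p + Ph p - Ay p) * Y p

lemma isMonopoleFrame_iff {Axi Aeta Ay Ph Y : P3 → Mat n} {τ : ℂ} (hY : Differentiable ℝ Y) :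
    IsMonopoleFrame Axi Aeta Ay Ph τ Y ↔
      IsLaxFrame (0, 1, 0) (1, 0, 1) (Ay + Ph) Axi τ Y ∧
        IsLaxFrame (-1, 0, 1) (0, 1, 0) Aeta (Ay - Ph) τ Y := by
  simp only [IsMonopoleFrame, IsLaxFrame, pdy_eq_fderiv (hY _), pdxi_eq_fderiv (hY _),
    pdeta_eq_fderiv (hY _), Pi.add_apply, Pi.sub_apply, sub_sub_eq_add_sub, forall_and]
  rfl

lemma SkewHerm.add {B C : P3 → Mat n} (hB : SkewHerm B) (hC : SkewHerm C) : SkewHerm (B + C) :=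
  fun p => by
    rw [Pi.add_apply, Matrix.conjTranspose_add, hB p, hC p, neg_add]

lemma SkewHerm.sub {B C : P3 → Mat n} (hB : SkewHerm B) (hC : SkewHerm C) : SkewHerm (B - C) :=
  fun p => by
    rw [Pi.sub_apply, Matrix.conjTranspose_sub, hB p, hC p, neg_sub_neg, neg_sub]

lemma exists_isMonopoleFrame_simpleFactor_mul {Axi Aeta Ay Ph S P T : P3 → Mat n} {a : ℂ}
    (hξ : ContDiff ℝ (⊤ : ℕ∞) Axi) (hη : ContDiff ℝ (⊤ : ℕ∞) Aeta)
    (hy : ContDiff ℝ (⊤ : ℕ∞) Ay) (hφ : ContDiff ℝ (⊤ : ℕ∞) Ph)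
    (hξ_skew : SkewHerm Axi) (hη_skew : SkewHerm Aeta) (hy_skew : SkewHerm Ay)
    (hφ_skew : SkewHerm Ph) (hS : Differentiable ℝ S) (hP : Differentiable ℝ P)
    (hT : ContDiff ℝ (⊤ : ℕ∞) T) (hunit : ∀ p, IsUnit (S p))
    (hP_idem : ∀ p, IsIdempotentElem (P p)) (hT_idem : ∀ p, IsIdempotentElem (T p))
    (hT_self : ∀ p, (T p)ᴴ = T p) (hTSP : ∀ p, T p * (S p * P p) = S p * P p)
    (hPST : ∀ p, P p * ((S p)⁻¹ * T p) = (S p)⁻¹ * T p)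
    (hsol : ∀ p, (a • pdy P p - pdxi P p) * P p = 0 ∧ (a • pdeta P p - pdy P p) * P p = 0)
    (hframe_a : IsMonopoleFrame Axi Aeta Ay Ph a S) :
    ∃ Axi' Ay' Ph' : P3 → Mat n, ContDiff ℝ (⊤ : ℕ∞) Axi' ∧ ContDiff ℝ (⊤ : ℕ∞) Ay' ∧
      ContDiff ℝ (⊤ : ℕ∞) Ph' ∧ Ay' + Ph' = Ay + Ph ∧
      ∀ τ ≠ a, ∀ Y, Differentiable ℝ Y → IsMonopoleFrame Axi Aeta Ay Ph τ Y →
        IsMonopoleFrame Axi' Aeta Ay' Ph' τ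
          (fun p => simpleFactor a (conj a) τ (T p) * Y p) := by
  have hT_diff : Differentiable ℝ T := hT.differentiable (by simp)
  simp only [pdy_eq_fderiv (hP _), pdxi_eq_fderiv (hP _), pdeta_eq_fderiv (hP _)] at hsol
  rw [isMonopoleFrame_iff hS] at hframe_a
  let Dξ := (a - conj a) • covDeriv (0, 1, 0) (Ay + Ph) T
  have hDξ : ContDiff ℝ (⊤ : ℕ∞) Dξ :=
    (contDiff_covDeriv (hy.add hφ) hT _).const_smul (a - conj a)
  let D := (a - conj a) • covDeriv (-1, 0, 1) Aeta T
  have hD : ContDiff ℝ (⊤ : ℕ∞) ((2⁻¹ : ℂ) • D) :=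
    ((contDiff_covDeriv hη hT _).const_smul (a - conj a)).const_smul (2⁻¹ : ℂ)
  have hsum : Ay + (2⁻¹ : ℂ) • D + (Ph - (2⁻¹ : ℂ) • D) = Ay + Ph := by abel
  have hdiff : Ay + (2⁻¹ : ℂ) • D - (Ph - (2⁻¹ : ℂ) • D) = Ay - Ph + D := by module
  refine ⟨Axi + Dξ, Ay + (2⁻¹ : ℂ) • D, Ph - (2⁻¹ : ℂ) • D, hξ.add hDξ, hy.add hD, hφ.sub hD,
    hsum, fun τ hτ Y hY hframe => ?_⟩
  have hgY : Differentiable ℝ fun p => simpleFactor a (conj a) τ (T p) * Y p := fun p =>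
    differentiableAt_matrix_mul (differentiable_simpleFactor hT_diff a (conj a) τ p) (hY p)
  rw [isMonopoleFrame_iff hY] at hframe
  rw [isMonopoleFrame_iff hgY, hsum, hdiff]
  exact ⟨isLaxFrame_simpleFactor_conj_mul hS hP hT_diff hY hunit (hy_skew.add hφ_skew) hξ_skew
      hP_idem hT_idem hT_self hTSP hPST (fun p => (hsol p).1) hframe_a.1 hτ hframe.1,
    isLaxFrame_simpleFactor_conj_mul hS hP hT_diff hY hunit hη_skew (hy_skew.sub hφ_skew)
      hP_idem hT_idem hT_self hTSP hPST (fun p => (hsol p).2) hframe_a.2 hτ hframe.2⟩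

end Monopole

theorem algebraic_backlund_monopole_general {n : ℕ} {Axi Aeta Ay Ph : P3 → Mat n}
    (hξ : ContDiff ℝ (⊤ : ℕ∞) Axi) (hη : ContDiff ℝ (⊤ : ℕ∞) Aeta)
    (hy : ContDiff ℝ (⊤ : ℕ∞) Ay) (hφ : ContDiff ℝ (⊤ : ℕ∞) Ph)
    (hξ_skew : SkewHerm Axi) (hη_skew : SkewHerm Aeta) (hy_skew : SkewHerm Ay)
    (hφ_skew : SkewHerm Ph) {a : ℂ} (ha : a.im ≠ 0)
    {V : Set ℂ} (hV : IsOpen V) (haV : a ∈ V) {ψ : P3 → ℂ → Mat n}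
    (hψ : ContDiffOn ℝ (⊤ : ℕ∞) (fun q : P3 × ℂ => ψ q.1 q.2) {q | q.2 ∈ V})
    (hψ_hol : ∀ p, ∀ τ ∈ V, DifferentiableAt ℂ (ψ p) τ) (hψ_unit : ∀ p, IsUnit (ψ p a))
    (hframe : ∀ τ ∈ V, IsMonopoleFrame Axi Aeta Ay Ph τ (fun p => ψ p τ))
    {P : P3 → Mat n} (hP : ContDiff ℝ (⊤ : ℕ∞) P) (hP_idem : ∀ p, IsIdempotentElem (P p))
    (hsol : ∀ p, (a • pdy P p - pdxi P p) * P p = 0 ∧ (a • pdeta P p - pdy P p) * P p = 0)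
    {T : P3 → Mat n} (hT_self : ∀ p, (T p)ᴴ = T p) (hT_idem : ∀ p, IsIdempotentElem (T p))
    (hT_range : ∀ p, LinearMap.range (T p).mulVecLin =
      (LinearMap.range (P p).mulVecLin).map (ψ p a).mulVecLin) :
    (∃ Ψ : P3 → ℂ → Mat n,
      (∀ p, ∀ τ ∈ V, τ ≠ a → τ ≠ conj a → Ψ p τ = solg a T p τ * ψ p τ * solginv a P p τ) ∧
      ∀ p, DifferentiableAt ℂ (Ψ p) a ∧ IsUnit (Ψ p a)) ∧
    ∃ Axi' Aeta' Ay' Ph' : P3 → Mat n, ContDiff ℝ (⊤ : ℕ∞) Axi' ∧ ContDiff ℝ (⊤ : ℕ∞) Aeta' ∧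
      ContDiff ℝ (⊤ : ℕ∞) Ay' ∧ ContDiff ℝ (⊤ : ℕ∞) Ph' ∧ (∀ p, Aeta' p = Aeta p) ∧
      (∀ p, Ay' p + Ph' p = Ay p + Ph p) ∧
      ∀ τ ∈ V, τ ≠ a → τ ≠ conj a →
        IsMonopoleFrame Axi' Aeta' Ay' Ph' τ (fun p => solg a T p τ * ψ p τ) := by
  have hab : a ≠ conj a := fun h => ha (Complex.conj_eq_iff_im.1 h.symm)
  have hψ_hol_near p : ∀ᶠ τ in nhds a, DifferentiableAt ℂ (ψ p) τ :=
    (hV.eventually_mem haV).mono (hψ_hol p)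
  have hψ_slice τ (hτ : τ ∈ V) : ContDiff ℝ (⊤ : ℕ∞) (fun p => ψ p τ) := contDiffOn_univ.1 <|
    hψ.comp (contDiff_id.prodMk contDiff_const).contDiffOn fun _ _ => hτ
  have hTψP p := mul_mul_eq_of_range_eq_map (hT_idem p) (hT_range p)
  have hPψT p := mul_inv_mul_eq_of_range_eq_map (hP_idem p) (hψ_unit p) (hT_range p)
  have hT := contDiff_of_mul_eq_of_inv_mul_eq (hψ_slice a haV) hP hψ_unit hT_self hTψP hPψT
  refine ⟨⟨fun p => dressedExtension a (conj a) (ψ p) (P p) (T p),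
    fun p τ _ hτ _ => dressedExtension_of_ne hab (hTψP p) hτ,
    fun p => ⟨differentiableAt_dressedExtension hab (hψ_hol_near p),
      isUnit_dressedExtension hab (hP_idem p) (hT_idem p) (hψ_hol_near p) (hψ_unit p) (hTψP p)
        (hPψT p)⟩⟩, ?_⟩
  obtain ⟨Axi', Ay', Ph', hξ', hy', hφ', hsum, hdressed⟩ :=
    exists_isMonopoleFrame_simpleFactor_mul hξ hη hy hφ hξ_skew hη_skew hy_skew hφ_skew
      ((hψ_slice a haV).differentiable (by simp)) (hP.differentiable (by simp)) hT hψ_unit hP_idem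
      hT_idem hT_self hTψP hPψT hsol (hframe a haV)
  exact ⟨Axi', Aeta, Ay', Ph', hξ', hη, hy', hφ', fun _ => rfl, congrFun hsum, fun τ hτV hτ _ =>
    hdressed τ hτ _ ((hψ_slice τ hτV).differentiable (by simp)) (hframe τ hτV)⟩

/-- **Algebraic Bäcklund transformation for monopoles.**
Given a frame `ψ` of a monopole `(A,φ)` on a conjugation-closed neighborhood `V` of `α`,
a 1-soliton projection `π`, and `π̃` the Hermitian projection onto `ψ(·,α)(range π)`:
(1) `ψ̃ = g_{α,π̃}·ψ·g_{α,π}⁻¹` extends holomorphically and invertibly to `τ = α`;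
(2) `ψ₁ = g_{α,π̃}·ψ` is a frame for new fields `(Ã, φ̃)` with `Ã_η = A_η` and
`Ã_y + φ̃ = A_y + φ`. -/
theorem algebraic_backlund_monopole {n : ℕ} (Ax Ay At Ph : P3 → Mat n)
    (hxs : ContDiff ℝ (⊤ : ℕ∞) Ax) (hys : ContDiff ℝ (⊤ : ℕ∞) Ay)
    (hts : ContDiff ℝ (⊤ : ℕ∞) At) (hps : ContDiff ℝ (⊤ : ℕ∞) Ph)
    (hxa : SkewHerm Ax) (hya : SkewHerm Ay) (hta : SkewHerm At) (hpa : SkewHerm Ph)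
    (a : ℂ) (ha : a.im ≠ 0)
    (V : Set ℂ) (hVo : IsOpen V) (haV : a ∈ V) (hVc : ∀ τ ∈ V, conj τ ∈ V)
    (ψ : P3 → ℂ → Mat n)
    (hψs : ContDiffOn ℝ (⊤ : ℕ∞) (fun q : P3 × ℂ => ψ q.1 q.2) {q : P3 × ℂ | q.2 ∈ V})
    (hψhol : ∀ (p : P3) (τ : ℂ), τ ∈ V → DifferentiableAt ℂ (ψ p) τ)
    (hψgl : ∀ (p : P3) (τ : ℂ), τ ∈ V → IsUnit (ψ p τ))
    (heq : ∀ τ ∈ V, ∀ p : P3,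
      τ • pdy (fun r => ψ r τ) p - pdxi (fun r => ψ r τ) p =
        (τ • (Ay p + Ph p) - (At p + Ax p)) * ψ p τ ∧
      τ • pdeta (fun r => ψ r τ) p - pdy (fun r => ψ r τ) p =
        (τ • (At p - Ax p) + Ph p - Ay p) * ψ p τ)
    (hreal : ∀ τ ∈ V, ∀ p : P3, (ψ p (conj τ))ᴴ * ψ p τ = 1)
    (Pr : P3 → Mat n) (hPrs : ContDiff ℝ (⊤ : ℕ∞) Pr)
    (hherm : ∀ p : P3, (Pr p)ᴴ = Pr p) (hidem : ∀ p : P3, Pr p * Pr p = Pr p)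
    (hsol : ∀ p : P3, (a • pdy Pr p - pdxi Pr p) * Pr p = 0 ∧
      (a • pdeta Pr p - pdy Pr p) * Pr p = 0)
    (Prt : P3 → Mat n)
    (hPrtherm : ∀ p : P3, (Prt p)ᴴ = Prt p) (hPrtidem : ∀ p : P3, Prt p * Prt p = Prt p)
    (hPrtrange : ∀ p : P3, LinearMap.range (Matrix.mulVecLin (Prt p)) =
      Submodule.map (Matrix.mulVecLin (ψ p a)) (LinearMap.range (Matrix.mulVecLin (Pr p)))) :
    (∃ Ψ : P3 → ℂ → Mat n,
      (∀ (p : P3) (τ : ℂ), τ ∈ V → τ ≠ a → τ ≠ conj a →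
        Ψ p τ = solg a Prt p τ * ψ p τ * solginv a Pr p τ) ∧
      (∀ p : P3, DifferentiableAt ℂ (Ψ p) a ∧ IsUnit (Ψ p a))) ∧
    (∃ Axi Aeta Ay' Ph' : P3 → Mat n,
      ContDiff ℝ (⊤ : ℕ∞) Axi ∧ ContDiff ℝ (⊤ : ℕ∞) Aeta ∧ ContDiff ℝ (⊤ : ℕ∞) Ay' ∧ ContDiff ℝ (⊤ : ℕ∞) Ph' ∧
      (∀ p : P3, Aeta p = At p - Ax p) ∧
      (∀ p : P3, Ay' p + Ph' p = Ay p + Ph p) ∧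
      (∀ τ : ℂ, τ ∈ V → τ ≠ a → τ ≠ conj a → ∀ p : P3,
        τ • pdy (fun r => solg a Prt r τ * ψ r τ) p -
            pdxi (fun r => solg a Prt r τ * ψ r τ) p =
          (τ • (Ay' p + Ph' p) - Axi p) * (solg a Prt p τ * ψ p τ) ∧
        τ • pdeta (fun r => solg a Prt r τ * ψ r τ) p -
            pdy (fun r => solg a Prt r τ * ψ r τ) p =
          (τ • Aeta p + Ph' p - Ay' p) * (solg a Prt p τ * ψ p τ))) := by
  exact algebraic_backlund_monopole_general (hts.add hxs) (hts.sub hxs) hys hps (hta.add hxa)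
    (hta.sub hxa) hya hpa ha hVo haV hψs hψhol (fun p => hψgl p a haV) heq hPrs hidem hsol
    hPrtherm hPrtidem hPrtrange
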